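/- (Uniform convergence of action-value functions.) Under the same assumptions (compact spaces; Lipschitz p, p⁰, r; Lipschitz parametrization Γ and joint policy π̃^θ), let Q^θ(x⁰, μ, u⁰, ξ) := E[ Σ_{t≥0} γ^t r(x⁰_t, u⁰_t, μ_t) | x⁰_0 = x⁰, μ_0 = μ, u⁰_0 = u⁰, ξ_0 = ξ ] be the action-value function of the limiting M3FC MDP under joint policy π̃^θ, and let Q̂^θ(x⁰, μ, u⁰, ξ) := E[ Σ_{t≥0} γ^t r(x_t^{0,N}, u_t^{0,N}, μ_t^N) | x_0^{0,N} = x⁰, μ_0 = μ, u_0^{0,N} = u⁰, ξ_0^N = ξ ] be its N-agent counterpart. Then Q̂^θ → Q^θ uniformly on 𝒳⁰ × 𝒫(𝒳) × 𝒰⁰ × Ξ (and uniformly over θ) as N → ∞. -/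

import Mathlib

open MeasureTheory

noncomputable instance {X : Type*} [MeasurableSpace X] : MeasurableSpace (ProbabilityMeasure X) :=
  inferInstanceAs (MeasurableSpace {μ : Measure X // IsProbabilityMeasure μ})

/-- `W₁` distance on probability measures, via Kantorovich duality. -/
noncomputable def W1 {X : Type*} [MeasurableSpace X] [PseudoMetricSpace X]
    (μ ν : ProbabilityMeasure X) : ℝ :=
  ⨆ f : {f : X → ℝ // LipschitzWith 1 f},
    |∫ x, (f : X → ℝ) x ∂(μ : Measure X) - ∫ x, (f : X → ℝ) x ∂(ν : Measure X)|

/-- Empirical measure of `N` points (an arbitrary probability measure if `N = 0`). -/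
noncomputable def emp {X : Type*} [MeasurableSpace X] [Nonempty X] (N : ℕ) (x : Fin N → X) :
    ProbabilityMeasure X := by
  classical
  exact if hN : N = 0 then ⟨Measure.dirac (Classical.arbitrary X), inferInstance⟩
  else ⟨(N : ENNReal)⁻¹ • ∑ i : Fin N, Measure.dirac (x i), by
    constructor
    simp only [Measure.smul_apply, Measure.coe_finset_sum, Finset.sum_apply,
      Measure.dirac_apply' _ MeasurableSet.univ, smul_eq_mul]
    simp only [Set.indicator_univ, Pi.one_apply, Finset.sum_const, Finset.card_univ,
      Fintype.card_fin, nsmul_eq_mul, mul_one]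
    exact ENNReal.inv_mul_cancel (by exact_mod_cast hN) (by simp)⟩

/-- Law of `(x⁰_t, (u⁰_t, ξ_t), (x^{i,N}_t)_i)` in the `N`-agent M3FC system under the
parametrized joint policy `π̃^θ` and decision-rule map `Γ`, started from the initial law `ι`:
at each step the joint action `(u⁰,ξ)` is sampled from `π̃^θ(·|x⁰,μ^N)`, each minor agent
samples its action from `Γ(ξ)(·|xⁱ)`, and states transition through `p`, `p⁰`. -/
noncomputable def pLawNFrom {X U X0 U0 Xi Θ : Type*} [MeasurableSpace X] [Nonempty X]
    [MeasurableSpace U] [MeasurableSpace X0] [MeasurableSpace U0] [MeasurableSpace Xi]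
    (p : X → U → X0 → U0 → ProbabilityMeasure X → ProbabilityMeasure X)
    (p0 : X0 → U0 → ProbabilityMeasure X → ProbabilityMeasure X0)
    (Γ : Xi → X → ProbabilityMeasure U)
    (pit : Θ → X0 → ProbabilityMeasure X → ProbabilityMeasure (U0 × Xi))
    (θ : Θ) (N : ℕ) (ι : Measure (X0 × (U0 × Xi) × (Fin N → X))) :
    ℕ → Measure (X0 × (U0 × Xi) × (Fin N → X))
  | 0 => ι
  | t + 1 => (pLawNFrom p p0 Γ pit θ N ι t).bind fun s =>
      (((p0 s.1 s.2.1.1 (emp N s.2.2) : Measure X0)).prod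
        (Measure.pi fun i => ((Γ s.2.1.2 (s.2.2 i) : Measure U)).bind
          fun u => (p (s.2.2 i) u s.1 s.2.1.1 (emp N s.2.2) : Measure X))).bind
        fun y => ((pit θ y.1 (emp N y.2) : Measure (U0 × Xi))).map fun a => (y.1, a, y.2)

/-- Law of `(x⁰_t, (u⁰_t, ξ_t), μ_t)` in the limiting M3FC process under the parametrized
joint policy `π̃^θ`, where `TG x⁰ u⁰ ξ μ` is the deterministic mean field transition
`T(x⁰,u⁰,μ, μ ⊗ Γ(ξ))`, started from the initial law `ι`. -/
noncomputable def pLimLawFrom {X U0 X0 Xi Θ : Type*} [MeasurableSpace X]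
    [MeasurableSpace X0] [MeasurableSpace U0] [MeasurableSpace Xi]
    (p0 : X0 → U0 → ProbabilityMeasure X → ProbabilityMeasure X0)
    (pit : Θ → X0 → ProbabilityMeasure X → ProbabilityMeasure (U0 × Xi))
    (TG : X0 → U0 → Xi → ProbabilityMeasure X → ProbabilityMeasure X)
    (θ : Θ) (ι : Measure (X0 × (U0 × Xi) × ProbabilityMeasure X)) :
    ℕ → Measure (X0 × (U0 × Xi) × ProbabilityMeasure X)
  | 0 => ι
  | t + 1 => (pLimLawFrom p0 pit TG θ ι t).bind fun s =>
      ((p0 s.1 s.2.1.1 s.2.2 : Measure X0)).bind fun y0 =>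
        ((pit θ y0 (TG s.1 s.2.1.1 s.2.1.2 s.2.2) : Measure (U0 × Xi))).map
          fun a => (y0, a, TG s.1 s.2.1.1 s.2.1.2 s.2.2)

/-!
On a compact space `W1` metrizes weak convergence, and by the Arzelà–Ascoli theorem it is controlled
up to `ε` by finitely many Lipschitz test functions. Given the state of the `N`-agent system, its
minor agents move independently, so for each test function the integral against the new empirical
measure has variance `O(1 / N)` around the integral against the deterministic mean field update.
Hence projecting `(x⁰, (u⁰, ξ), (xⁱ)ᵢ)` to `(x⁰, (u⁰, ξ), μᴺ)` intertwines the transition kernels of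
the `N`-agent system and of the limiting process up to an error that vanishes as `N → ∞`, uniformly
in the state and in the policy; sampling the initial states from `μ` costs an error of the same
kind. The limiting kernel is Lipschitz, with a constant that depends on the policy only through its
Lipschitz constant, so the laws at each fixed time are uniformly close. Dominated convergence with
the weights `γ ^ t` sums these estimates over time.
-/

open Filter Topology ProbabilityTheory Set
open scoped NNReal

section Integral

theorem integrable_of_continuous {α : Type*} [TopologicalSpace α] [CompactSpace α]
    [MeasurableSpace α] [OpensMeasurableSpace α] {m : Measure α} [IsFiniteMeasure m] {f : α → ℝ}
    (hf : Continuous f) : Integrable f m :=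
  hf.integrable_of_hasCompactSupport (.of_compactSpace f)

theorem abs_integral_sub_integral_le {α : Type*} [MeasurableSpace α] {m : Measure α}
    [IsProbabilityMeasure m] {f g : α → ℝ} (hf : Integrable f m) (hg : Integrable g m) {c : ℝ}
    (h : ∀ x, |f x - g x| ≤ c) : |∫ x, f x ∂m - ∫ x, g x ∂m| ≤ c := by
  rw [← integral_sub hf hg]
  simpa using norm_integral_le_of_norm_le_const (μ := m) (f := fun x => f x - g x) (.of_forall h)

theorem continuous_integral_continuousMap {α : Type*} [TopologicalSpace α] [CompactSpace α]
    [MeasurableSpace α] [OpensMeasurableSpace α] (m : Measure α) [IsProbabilityMeasure m] :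
    Continuous fun f : C(α, ℝ) => ∫ x, f x ∂m := by
  refine LipschitzWith.continuous (K := 1) (.of_dist_le_mul fun f g => ?_)
  rw [NNReal.coe_one, one_mul]
  exact abs_integral_sub_integral_le (integrable_of_continuous f.continuous)
    (integrable_of_continuous g.continuous) (ContinuousMap.dist_apply_le_dist (f := f) (g := g))

theorem dist_le_diam_univ {α : Type*} [PseudoMetricSpace α] [CompactSpace α] (x y : α) :
    dist x y ≤ Metric.diam (univ : Set α) :=
  Metric.dist_le_diam_of_mem isCompact_univ.isBounded (mem_univ x) (mem_univ y)

theorem lipschitzWith_one_iff_abs_sub_le {α : Type*} [PseudoMetricSpace α] {f : α → ℝ} :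
    LipschitzWith 1 f ↔ ∀ x y, |f x - f y| ≤ dist x y := by
  simp [lipschitzWith_iff_dist_le_mul, Real.dist_eq]

theorem isCompact_setOf_lipschitzWith_one_and_apply_eq_zero {X : Type*}
    [PseudoMetricSpace X] [CompactSpace X] (a : X) :
    IsCompact {f : C(X, ℝ) | LipschitzWith 1 f ∧ f a = 0} := by
  refine ArzelaAscoli.isCompact_of_equicontinuous _ ?_
    (LipschitzWith.uniformEquicontinuous _ 1 fun f => f.2.1).equicontinuous
  refine (isCompact_univ_pi fun _ : X => isCompact_closedBall (0 : ℝ)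
    (Metric.diam (univ : Set X))).of_isClosed_subset ?_ ?_
  · have himage : ContinuousMap.toFun '' {f : C(X, ℝ) | LipschitzWith 1 f ∧ f a = 0} =
        {f : X → ℝ | LipschitzWith 1 f} ∩ {f | f a = 0} :=
      Subset.antisymm (by rintro _ ⟨f, hf, rfl⟩; exact hf)
        fun f hf => ⟨⟨f, hf.1.continuous⟩, hf, rfl⟩
    rw [himage]
    exact (isClosed_setOfPred_lipschitzWith 1).inter
      (isClosed_singleton.preimage (continuous_apply a))
  · rintro _ ⟨f, ⟨hf, hfa⟩, rfl⟩ x -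
    rw [mem_closedBall_zero_iff, ← sub_zero (f.toFun x), ← hfa]
    exact (lipschitzWith_one_iff_abs_sub_le.1 hf x a).trans (dist_le_diam_univ x a)

end Integral

section Wasserstein
variable {X : Type*} [PseudoMetricSpace X] [CompactSpace X] [MeasurableSpace X] [BorelSpace X]

theorem bddAbove_range_W1 (μ ν : ProbabilityMeasure X) :
    BddAbove (range fun f : {f : X → ℝ // LipschitzWith 1 f} =>
      |∫ x, (f : X → ℝ) x ∂(μ : Measure X) - ∫ x, (f : X → ℝ) x ∂(ν : Measure X)|) := by
  obtain ⟨a⟩ : Nonempty X := μ.nonempty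
  refine ⟨Metric.diam (univ : Set X) + Metric.diam (univ : Set X), ?_⟩
  rintro _ ⟨⟨f, hf⟩, rfl⟩
  have near_base (m : ProbabilityMeasure X) :
      |∫ x, f x ∂(m : Measure X) - f a| ≤ Metric.diam (univ : Set X) := by
    simpa using abs_integral_sub_integral_le (m := (m : Measure X))
      (integrable_of_continuous hf.continuous) (integrable_const (f a)) fun x =>
        (lipschitzWith_one_iff_abs_sub_le.1 hf x a).trans (dist_le_diam_univ x a)
  calc _ ≤ |∫ x, f x ∂(μ : Measure X) - f a| + |f a - ∫ x, f x ∂(ν : Measure X)| :=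
        abs_sub_le _ _ _
    _ ≤ _ := add_le_add (near_base μ) (abs_sub_comm _ (f a) ▸ near_base ν)

theorem W1_le_iff {μ ν : ProbabilityMeasure X} {c : ℝ} :
    W1 μ ν ≤ c ↔ ∀ f : X → ℝ, LipschitzWith 1 f →
      |∫ x, f x ∂(μ : Measure X) - ∫ x, f x ∂(ν : Measure X)| ≤ c := by
  have : Nonempty {f : X → ℝ // LipschitzWith 1 f} := ⟨⟨fun _ => 0, .const' 0⟩⟩
  simp [W1, ciSup_le_iff (bddAbove_range_W1 μ ν)]

theorem abs_integral_sub_le_mul_W1 {K : ℝ≥0} {f : X → ℝ} (hf : LipschitzWith K f)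
    (μ ν : ProbabilityMeasure X) :
    |∫ x, f x ∂(μ : Measure X) - ∫ x, f x ∂(ν : Measure X)| ≤ K * W1 μ ν := by
  rcases eq_or_ne K 0 with rfl | hK
  · obtain ⟨a⟩ : Nonempty X := μ.nonempty
    have hconst : f = fun _ => f a := funext fun x => by simpa using hf.dist_le_mul x a
    rw [hconst]
    simp
  · have hscaled : LipschitzWith 1 fun x => (K : ℝ)⁻¹ * f x := by
      refine .of_dist_le_mul fun x y => ?_
      have := hf.dist_le_mul x y
      rw [Real.dist_eq] at this ⊢
      rw [← mul_sub, abs_mul, abs_of_nonneg (by positivity), inv_mul_le_iff₀ (by positivity)]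
      simpa using this
    have h := W1_le_iff.1 (le_refl (W1 μ ν)) _ hscaled
    rwa [integral_const_mul, integral_const_mul, ← mul_sub, abs_mul,
      abs_of_nonneg (by positivity), inv_mul_le_iff₀ (by positivity)] at h

theorem exists_finset_W1_le {ε : ℝ} (hε : 0 < ε) : ∃ F : Finset C(X, ℝ),
    (∀ f ∈ F, LipschitzWith 1 f) ∧ ∀ μ ν : ProbabilityMeasure X,
      W1 μ ν ≤ ε + ∑ f ∈ F, |∫ x, f x ∂(μ : Measure X) - ∫ x, f x ∂(ν : Measure X)| := by
  rcases isEmpty_or_nonempty X with hX | ⟨⟨a⟩⟩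
  · exact ⟨∅, by simp, fun μ => (not_nonempty_iff.2 hX μ.nonempty).elim⟩
  obtain ⟨F, hFsub, hFfin, hFcover⟩ := Metric.finite_approx_of_totallyBounded
    (isCompact_setOf_lipschitzWith_one_and_apply_eq_zero a).totallyBounded (ε / 2) (half_pos hε)
  refine ⟨hFfin.toFinset, fun f hf => (hFsub (hFfin.mem_toFinset.1 hf)).1, fun μ ν => ?_⟩
  refine W1_le_iff.2 fun f hf => ?_
  obtain ⟨h, hhF, hfh⟩ : ∃ h ∈ F, ∀ x, |f x - (h x + f a)| ≤ ε / 2 := by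
    let g : C(X, ℝ) := ⟨fun x => f x - f a, hf.continuous.sub continuous_const⟩
    have hg : LipschitzWith 1 g ∧ g a = 0 :=
      ⟨lipschitzWith_one_iff_abs_sub_le.2 fun x y => by
        simpa [g] using lipschitzWith_one_iff_abs_sub_le.1 hf x y, sub_self _⟩
    obtain ⟨h, hhF, hgh⟩ := mem_iUnion₂.1 (hFcover hg)
    refine ⟨h, hhF, fun x => ?_⟩
    rw [← sub_sub, sub_right_comm]
    exact (ContinuousMap.dist_apply_le_dist x).trans (Metric.mem_ball.1 hgh).le
  have approx (m : ProbabilityMeasure X) :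
      |∫ x, f x ∂(m : Measure X) - (∫ x, h x ∂(m : Measure X) + f a)| ≤ ε / 2 := by
    have := abs_integral_sub_integral_le (m := (m : Measure X))
      (integrable_of_continuous hf.continuous)
      (integrable_of_continuous (f := fun x => h x + f a) (by fun_prop)) hfh
    rw [integral_add (integrable_of_continuous h.continuous) (integrable_const _)] at this
    simpa using this
  have hsum := Finset.single_le_sum (f := fun h : C(X, ℝ) =>
    |∫ x, h x ∂(μ : Measure X) - ∫ x, h x ∂(ν : Measure X)|) (fun _ _ => abs_nonneg _)
    (hFfin.mem_toFinset.2 hhF)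
  have hμ := abs_le.1 (approx μ)
  have hν := abs_le.1 (approx ν)
  have hμν := abs_le.1 hsum
  exact abs_le.2 ⟨by linarith, by linarith⟩

theorem tendsto_W1 (μ : ProbabilityMeasure X) : Tendsto (W1 μ) (𝓝 μ) (𝓝 0) := by
  refine tendsto_order.2 ⟨fun c hc => .of_forall fun ν =>
    hc.trans_le (Real.iSup_nonneg fun _ => abs_nonneg _), fun ε hε => ?_⟩
  obtain ⟨F, -, hF⟩ := exists_finset_W1_le (X := X) (half_pos hε)
  have hcont : Continuous fun ν : ProbabilityMeasure X =>
      ∑ f ∈ F, |∫ x, f x ∂(μ : Measure X) - ∫ x, f x ∂(ν : Measure X)| :=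
    continuous_finsetSum _ fun f _ =>
      (continuous_const.sub (ProbabilityMeasure.continuous_integral_continuousMap f)).abs
  filter_upwards [(hcont.tendsto' μ 0 (by simp)).eventually_lt_const (half_pos hε)] with ν hν
  linarith [hF μ ν]

theorem nhds_eq_comap_W1 (μ : ProbabilityMeasure X) : 𝓝 μ = comap (W1 μ) (𝓝 0) := by
  refine le_antisymm (tendsto_W1 μ).le_comap ?_
  refine tendsto_id'.1 (tendsto_iff_forall_lipschitz_integral_tendsto.2 ?_)
  rintro f - ⟨K, hf⟩
  rw [tendsto_iff_dist_tendsto_zero]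
  refine squeeze_zero (fun _ => dist_nonneg) (fun ν => ?_)
    (by simpa using (tendsto_comap (f := W1 μ) (x := 𝓝 0)).const_mul (K : ℝ))
  rw [dist_comm, Real.dist_eq]
  exact abs_integral_sub_le_mul_W1 hf μ ν

/-- The Wasserstein metric `W1` on the probability measures of a compact space. Its topology is,
by definition, the topology of weak convergence. -/
noncomputable instance : PseudoMetricSpace (ProbabilityMeasure X) :=
  let wasserstein : PseudoMetricSpace (ProbabilityMeasure X) :=
    { dist := W1
      dist_self := fun μ => by simp [W1]
      dist_comm := fun μ ν => by simp only [W1, abs_sub_comm]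
      dist_triangle := fun μ ν κ => W1_le_iff.2 fun f hf =>
        (abs_sub_le _ (∫ x, f x ∂(ν : Measure X)) _).trans
          (add_le_add (W1_le_iff.1 le_rfl f hf) (W1_le_iff.1 le_rfl f hf)) }
  wasserstein.replaceTopology <| TopologicalSpace.ext_nhds fun μ => by
    rw [nhds_eq_comap_W1, ← @nhds_comap_dist _ wasserstein]
    exact congrArg (comap · (𝓝 0)) (funext fun ν => wasserstein.dist_comm μ ν)

theorem dist_le_iff_forall_lipschitzWith {μ ν : ProbabilityMeasure X} {c : ℝ} :
    dist μ ν ≤ c ↔ ∀ f : X → ℝ, LipschitzWith 1 f →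
      |∫ x, f x ∂(μ : Measure X) - ∫ x, f x ∂(ν : Measure X)| ≤ c :=
  W1_le_iff

theorem lipschitzWith_integral {K : ℝ≥0} {f : X → ℝ} (hf : LipschitzWith K f) :
    LipschitzWith K fun μ : ProbabilityMeasure X => ∫ x, f x ∂(μ : Measure X) :=
  .of_dist_le_mul fun μ ν => abs_integral_sub_le_mul_W1 hf μ ν

theorem continuous_integral_of_continuous {f : X → ℝ} (hf : Continuous f) :
    Continuous fun μ : ProbabilityMeasure X => ∫ x, f x ∂(μ : Measure X) :=
  ProbabilityMeasure.continuous_integral_continuousMap (⟨f, hf⟩ : C(X, ℝ))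

end Wasserstein

section Borel

theorem measurable_toMeasure_of_continuous {Y : Type*} [TopologicalSpace Y]
    [HasOuterApproxClosed Y] [MeasurableSpace Y] [BorelSpace Y] {Z : Type*} [TopologicalSpace Z]
    [MeasurableSpace Z] [OpensMeasurableSpace Z] {κ : Z → ProbabilityMeasure Y}
    (hκ : Continuous κ) : Measurable fun z => (κ z : Measure Y) := by
  refine Measurable.measure_of_isPiSystem_of_isProbabilityMeasure (S := {s | IsClosed s})
    (BorelSpace.measurable_eq.trans borel_eq_generateFrom_isClosed) isPiSystem_isClosed
    fun s hs => ?_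
  refine measurable_of_tendsto_metrizable (fun n =>
    ((ProbabilityMeasure.continuous_lintegral_boundedContinuousFunction (hs.apprSeq n)).comp
      hκ).measurable) (tendsto_pi_nhds.2 fun z => ?_)
  exact HasOuterApproxClosed.tendsto_lintegral_apprSeq hs _

theorem measurable_integral_probabilityMeasure {Y : Type*} [MeasurableSpace Y] {f : Y → ℝ}
    (hf : StronglyMeasurable f) :
    Measurable fun μ : ProbabilityMeasure Y => ∫ y, f y ∂(μ : Measure Y) :=
  (StronglyMeasurable.integral_kernel (κ := ⟨fun μ : ProbabilityMeasure Y => (μ : Measure Y),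
    measurable_subtype_coe⟩) hf).measurable

variable {X : Type*} [MetricSpace X] [CompactSpace X] [MeasurableSpace X] [BorelSpace X]

theorem isClosedEmbedding_integral_denseSeq :
    IsClosedEmbedding fun (μ : ProbabilityMeasure X) (n : ℕ) =>
      ∫ x, TopologicalSpace.denseSeq C(X, ℝ) n x ∂(μ : Measure X) := by
  refine (continuous_pi fun n => continuous_integral_of_continuous
    (map_continuous _)).isClosedEmbedding fun μ ν h => ProbabilityMeasure.toMeasure_injective ?_
  have hall := (continuous_integral_continuousMap (μ : Measure X)).ext_on
    (TopologicalSpace.denseRange_denseSeq C(X, ℝ))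
    (continuous_integral_continuousMap (ν : Measure X)) (by rintro _ ⟨n, rfl⟩; exact congrFun h n)
  exact ext_of_forall_integral_eq_of_IsFiniteMeasure fun f => congrFun hall f.toContinuousMap

/-- The integrals of a dense sequence of test functions embed the weak topology in `ℕ → ℝ` and are
measurable for the evaluation σ-algebra, which is therefore the Borel σ-algebra. -/
instance : BorelSpace (ProbabilityMeasure X) := by
  refine ⟨le_antisymm ?_ ?_⟩
  · have hcoe : Measurable[borel (ProbabilityMeasure X)] (fun μ => (μ : Measure X)) :=
      @measurable_toMeasure_of_continuous X _ _ _ _ (ProbabilityMeasure X) _ (borel _)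
        (@OpensMeasurableSpace.mk _ _ (borel _) le_rfl) _ continuous_id
    exact hcoe.comap_le
  · refine MeasurableSpace.generateFrom_le fun s hs => ?_
    obtain ⟨t, ht, rfl⟩ := isClosedEmbedding_integral_denseSeq.isInducing.isOpen_iff.1 hs
    exact measurable_pi_lambda _ (fun n => measurable_integral_probabilityMeasure
      (map_continuous (TopologicalSpace.denseSeq C(X, ℝ) n)).stronglyMeasurable) ht.measurableSet

end Borel

section Bind

/-- The law of a point drawn from `κ y`, where `y` has law `m`, for a weakly continuous Markov
kernel `κ`. -/
noncomputable def bindProba {Y V : Type*} [TopologicalSpace Y] [MeasurableSpace Y]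
    [OpensMeasurableSpace Y] [TopologicalSpace V] [HasOuterApproxClosed V] [MeasurableSpace V]
    [BorelSpace V] (m : ProbabilityMeasure Y) (κ : C(Y, ProbabilityMeasure V)) :
    ProbabilityMeasure V :=
  ⟨(m : Measure Y).bind fun y => κ y,
    isProbabilityMeasure_bind (measurable_toMeasure_of_continuous κ.continuous).aemeasurable
      (.of_forall fun _ => inferInstance)⟩

section Topological
variable {Y V : Type*} [TopologicalSpace Y] [MeasurableSpace Y] [OpensMeasurableSpace Y]
  [TopologicalSpace V] [HasOuterApproxClosed V] [MeasurableSpace V] [BorelSpace V]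

theorem toMeasure_bindProba (m : ProbabilityMeasure Y) (κ : C(Y, ProbabilityMeasure V)) :
    (bindProba m κ : Measure V) = (m : Measure Y).bind fun y => κ y := rfl

theorem integral_bindProba [CompactSpace V] (m : ProbabilityMeasure Y)
    (κ : C(Y, ProbabilityMeasure V)) {f : V → ℝ} (hf : Continuous f) :
    ∫ v, f v ∂(bindProba m κ : Measure V) = ∫ y, ∫ v, f v ∂(κ y : Measure V) ∂(m : Measure Y) := by
  let k : Kernel Y V := ⟨fun y => κ y, measurable_toMeasure_of_continuous κ.continuous⟩
  have : IsMarkovKernel k := ⟨fun y => inferInstanceAs (IsProbabilityMeasure (κ y : Measure V))⟩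
  exact Kernel.integral_comp (κ := Kernel.const Unit (m : Measure Y)) (η := k) (a := ())
    (integrable_of_continuous hf)

theorem map_bindProba {W : Type*} [TopologicalSpace W] [HasOuterApproxClosed W] [MeasurableSpace W]
    [BorelSpace W] (m : ProbabilityMeasure Y) (κ : C(Y, ProbabilityMeasure V)) (e : C(V, W)) :
    (bindProba m κ).map e.measurable.aemeasurable = bindProba m
      ⟨fun y => (κ y).map e.measurable.aemeasurable,
        (ProbabilityMeasure.continuous_map e.continuous).comp κ.continuous⟩ := by
  refine Subtype.ext ?_
  let k : Kernel Y V := ⟨fun y => κ y, measurable_toMeasure_of_continuous κ.continuous⟩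
  refine (Measure.map_comp (m : Measure Y) k e.measurable).trans ?_
  exact congrArg (Measure.bind _) (funext fun y => Kernel.map_apply k e.measurable y)

end Topological

section Metric
variable {V : Type*} [PseudoMetricSpace V] [CompactSpace V] [MeasurableSpace V] [BorelSpace V]

theorem lipschitzWith_diracProba : LipschitzWith 1 (diracProba : V → ProbabilityMeasure V) :=
  .of_dist_le_mul fun v w => dist_le_iff_forall_lipschitzWith.2 fun f hf => by
    simpa [diracProba, integral_dirac' f _ hf.continuous.stronglyMeasurable] using
      lipschitzWith_one_iff_abs_sub_le.1 hf v w

theorem dist_diracProba_le (m : ProbabilityMeasure V) (v : V) :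
    dist m (diracProba v) ≤ ∫ w, dist w v ∂(m : Measure V) := by
  refine dist_le_iff_forall_lipschitzWith.2 fun f hf => ?_
  have hdirac : ∫ w, f w ∂(diracProba v : Measure V) = ∫ _, f v ∂(m : Measure V) := by
    simp [diracProba, integral_dirac' f _ hf.continuous.stronglyMeasurable]
  rw [hdirac, ← integral_sub (integrable_of_continuous hf.continuous) (integrable_const _)]
  exact abs_integral_le_integral_abs.trans (integral_mono_of_nonneg
    (.of_forall fun _ => abs_nonneg _) (integrable_of_continuous (by fun_prop))
    (.of_forall fun w => lipschitzWith_one_iff_abs_sub_le.1 hf w v))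

theorem dist_bindProba_le {E Y : Type*} [TopologicalSpace E] [CompactSpace E] [MeasurableSpace E]
    [OpensMeasurableSpace E] [PseudoMetricSpace Y] [CompactSpace Y] [MeasurableSpace Y]
    [BorelSpace Y] (m : ProbabilityMeasure E) (κ : C(E, ProbabilityMeasure V))
    (m' : ProbabilityMeasure Y) {κ' : C(Y, ProbabilityMeasure V)} {K : ℝ≥0}
    (hκ' : LipschitzWith K κ') (e : C(E, Y)) :
    dist (bindProba m κ) (bindProba m' κ') ≤
      ∫ x, dist (κ x) (κ' (e x)) ∂(m : Measure E)
        + K * dist (m.map e.measurable.aemeasurable) m' := by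
  refine dist_le_iff_forall_lipschitzWith.2 fun f hf => ?_
  have hκf : Continuous fun x => ∫ v, f v ∂(κ x : Measure V) :=
    (continuous_integral_of_continuous hf.continuous).comp κ.continuous
  have hκ'f : LipschitzWith K fun y => ∫ v, f v ∂(κ' y : Measure V) :=
    one_mul K ▸ (lipschitzWith_integral hf).comp hκ'
  have hmap : ∫ y, ∫ v, f v ∂(κ' y : Measure V) ∂(m.map e.measurable.aemeasurable : Measure Y) =
      ∫ x, ∫ v, f v ∂(κ' (e x) : Measure V) ∂(m : Measure E) :=
    integral_map e.measurable.aemeasurable hκ'f.continuous.aestronglyMeasurable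
  rw [integral_bindProba m κ hf.continuous, integral_bindProba m' κ' hf.continuous]
  refine (abs_sub_le _ (∫ x, ∫ v, f v ∂(κ' (e x) : Measure V) ∂(m : Measure E)) _).trans
    (add_le_add ?_ ?_)
  · rw [← integral_sub (integrable_of_continuous hκf)
      (integrable_of_continuous (f := fun x => ∫ v, f v ∂(κ' (e x) : Measure V))
        (hκ'f.continuous.comp e.continuous))]
    exact abs_integral_le_integral_abs.trans (integral_mono_of_nonneg
      (.of_forall fun _ => abs_nonneg _) (integrable_of_continuous (by fun_prop))
      (.of_forall fun x => dist_le_iff_forall_lipschitzWith.1 le_rfl f hf))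
  · rw [← hmap]
    exact (lipschitzWith_integral hκ'f).dist_le_mul _ _

variable {Y Z : Type*} [PseudoMetricSpace Y] [CompactSpace Y] [MeasurableSpace Y] [BorelSpace Y]

theorem dist_bindProba_le_add {m m' : ProbabilityMeasure Y} {κ κ' : C(Y, ProbabilityMeasure V)}
    {c : ℝ} (hc : ∀ y, dist (κ y) (κ' y) ≤ c) {K : ℝ≥0} (hκ' : LipschitzWith K κ') :
    dist (bindProba m κ) (bindProba m' κ') ≤ c + K * dist m m' := by
  have h := dist_bindProba_le m κ m' hκ' (.id Y)
  have hid : m.map (ContinuousMap.id Y).measurable.aemeasurable = m :=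
    Subtype.ext Measure.map_id
  rw [hid] at h
  refine h.trans (add_le_add_left ?_ _)
  simpa using integral_mono (μ := (m : Measure Y)) (integrable_of_continuous (by fun_prop))
    (integrable_const c) hc

variable [TopologicalSpace Z]

theorem lipschitzWith_bindProba_right (m : ProbabilityMeasure Y) :
    LipschitzWith 1 fun κ : C(Y, ProbabilityMeasure V) => bindProba m κ := by
  refine .of_dist_le_mul fun κ κ' => dist_le_iff_forall_lipschitzWith.2 fun f hf => ?_
  have hcont (κ : C(Y, ProbabilityMeasure V)) :
      Continuous fun y => ∫ v, f v ∂(κ y : Measure V) :=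
    (continuous_integral_of_continuous hf.continuous).comp κ.continuous
  rw [integral_bindProba m κ hf.continuous, integral_bindProba m κ' hf.continuous,
    NNReal.coe_one, one_mul]
  exact abs_integral_sub_integral_le (integrable_of_continuous (hcont κ))
    (integrable_of_continuous (hcont κ')) fun y =>
      (dist_le_iff_forall_lipschitzWith.1 le_rfl f hf).trans (ContinuousMap.dist_apply_le_dist y)

theorem continuous_bindProba_left (κ : C(Y, ProbabilityMeasure V)) :
    Continuous fun m : ProbabilityMeasure Y => bindProba m κ := by
  refine ProbabilityMeasure.continuous_iff_forall_continuousMap_continuous_integral.2 fun f => ?_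
  simp_rw [integral_bindProba _ κ f.continuous]
  exact continuous_integral_of_continuous
    ((continuous_integral_of_continuous f.continuous).comp κ.continuous)

theorem continuous_bindProba :
    Continuous fun mκ : ProbabilityMeasure Y × C(Y, ProbabilityMeasure V) =>
      bindProba mκ.1 mκ.2 :=
  continuous_prod_of_continuous_lipschitzWith'
    (fun mκ : ProbabilityMeasure Y × C(Y, ProbabilityMeasure V) => bindProba mκ.1 mκ.2) 1
    lipschitzWith_bindProba_right fun κ => continuous_bindProba_left κ

/-- The composition of Markov kernels: from `z`, draw `y` from `μ z`, then a point from
`κ (z, y)`. -/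
noncomputable def bindKernel (μ : C(Z, ProbabilityMeasure Y)) (κ : C(Z × Y, ProbabilityMeasure V)) :
    C(Z, ProbabilityMeasure V) where
  toFun z := bindProba (μ z) (κ.curry z)
  continuous_toFun := (continuous_bindProba.comp (μ.continuous.prodMk κ.curry.continuous) :)

theorem lipschitzWith_bindKernel {Z : Type*} [PseudoMetricSpace Z] {μ : C(Z, ProbabilityMeasure Y)}
    {κ : C(Z × Y, ProbabilityMeasure V)} {K L : ℝ≥0} (hμ : LipschitzWith K μ)
    (hκ : LipschitzWith L κ) : LipschitzWith (L + L * K) (bindKernel μ κ) := by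
  refine .of_dist_le_mul fun z z' => ?_
  have hcurry : LipschitzWith L (κ.curry z') :=
    mul_one L ▸ hκ.comp (LipschitzWith.prodMk_left z')
  refine (dist_bindProba_le_add (κ := κ.curry z) (c := L * dist z z')
    (fun y => by simpa using hκ.dist_le_mul (z, y) (z', y)) hcurry).trans ?_
  push_cast
  nlinarith [hμ.dist_le_mul z z', L.coe_nonneg]

end Metric
end Bind

section Empirical

theorem integral_abs_sub_integral_le_sqrt_variance {Ω : Type*} [MeasurableSpace Ω] {m : Measure Ω}
    [IsProbabilityMeasure m] {Z : Ω → ℝ} (hZ : MemLp Z 2 m) :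
    ∫ ω, |Z ω - m[Z]| ∂m ≤ √(Var[Z; m]) := by
  have hvar := variance_nonneg (fun ω => |Z ω - m[Z]|) m
  have habs : MemLp (fun ω => |Z ω - m[Z]|) 2 m := (hZ.sub (memLp_const _)).abs
  rw [variance_eq_sub habs] at hvar
  simp only [Pi.pow_apply, sq_abs, ← variance_eq_integral hZ.aemeasurable] at hvar
  exact Real.le_sqrt_of_sq_le (sub_nonneg.1 hvar)

theorem integral_abs_average_sub_average_le {ι α : Type*} [Fintype ι] [Nonempty ι]
    [MeasurableSpace α] (q : ι → Measure α) [∀ i, IsProbabilityMeasure (q i)] {f : α → ℝ}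
    (hf : Measurable f) {a b : ℝ} (hab : ∀ x, f x ∈ Icc a b) :
    ∫ y, |(Fintype.card ι : ℝ)⁻¹ * ∑ i, f (y i) - (Fintype.card ι : ℝ)⁻¹ * ∑ i, ∫ x, f x ∂q i|
      ∂Measure.pi q ≤ (b - a) / 2 / √(Fintype.card ι) := by
  have hL2 (i : ι) : MemLp f 2 (q i) :=
    memLp_of_bounded (.of_forall hab) hf.aestronglyMeasurable 2
  have hL2' (i : ι) : MemLp (fun y : ι → α => f (y i)) 2 (Measure.pi q) :=
    (hL2 i).comp_measurePreserving (measurePreserving_eval q i)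
  have hmean : ∫ y, (Fintype.card ι : ℝ)⁻¹ * ∑ i, f (y i) ∂Measure.pi q =
      (Fintype.card ι : ℝ)⁻¹ * ∑ i, ∫ x, f x ∂q i := by
    rw [integral_const_mul, integral_finsetSum _ fun i _ => (hL2' i).integrable one_le_two]
    simp only [integral_comp_eval (μ := q) (f := f) hf.aestronglyMeasurable]
  have hvar : Var[fun y => (Fintype.card ι : ℝ)⁻¹ * ∑ i, f (y i); Measure.pi q] ≤
      ((b - a) / 2 / √(Fintype.card ι)) ^ 2 := by
    have hsum := variance_sum_pi (X := fun _ => f) hL2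
    rw [variance_const_mul, div_pow, Real.sq_sqrt (by positivity)]
    simp only [Finset.sum_fn] at hsum
    rw [hsum]
    calc _ ≤ (Fintype.card ι : ℝ)⁻¹ ^ 2 * ∑ _i : ι, ((b - a) / 2) ^ 2 := by
          gcongr with i
          exact variance_le_sq_of_bounded (.of_forall hab) hf.aemeasurable
      _ = _ := by
          rw [Finset.sum_const, Finset.card_univ, nsmul_eq_mul]
          field_simp
  have habs := integral_abs_sub_integral_le_sqrt_variance
    ((memLp_finsetSum Finset.univ fun i _ => hL2' i).const_mul (Fintype.card ι : ℝ)⁻¹)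
  obtain ⟨x⟩ : Nonempty α := nonempty_of_isProbabilityMeasure (q (Classical.arbitrary ι))
  have hba : 0 ≤ b - a := sub_nonneg.2 ((hab x).1.trans (hab x).2)
  rw [hmean] at habs
  exact habs.trans ((Real.sqrt_le_sqrt hvar).trans_eq (Real.sqrt_sq (by positivity)))

theorem integral_emp {X : Type*} [MeasurableSpace X] [Nonempty X] {N : ℕ} (hN : N ≠ 0)
    (x : Fin N → X) {f : X → ℝ} (hf : StronglyMeasurable f) :
    ∫ y, f y ∂(emp N x : Measure X) = (N : ℝ)⁻¹ * ∑ i, f (x i) := by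
  have hcoe : (emp N x : Measure X) = (N : ENNReal)⁻¹ • ∑ i, Measure.dirac (x i) := by
    simp [emp, hN]
  rw [hcoe, integral_smul_measure,
    integral_finsetSum_measure fun i _ => integrable_dirac' hf (by simp)]
  simp [integral_dirac' f _ hf]

theorem integral_bindProba_emp {X V : Type*} [TopologicalSpace X] [CompactSpace X]
    [MeasurableSpace X] [OpensMeasurableSpace X] [Nonempty X] [PseudoMetricSpace V] [CompactSpace V]
    [MeasurableSpace V] [BorelSpace V] {N : ℕ} (hN : N ≠ 0) (x : Fin N → X)
    (κ : C(X, ProbabilityMeasure V)) {f : V → ℝ} (hf : Continuous f) :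
    ∫ v, f v ∂(bindProba (emp N x) κ : Measure V) =
      (N : ℝ)⁻¹ * ∑ i, ∫ v, f v ∂(κ (x i) : Measure V) :=
  have hcont : Continuous fun x => ∫ v, f v ∂(κ x : Measure V) :=
    (continuous_integral_of_continuous hf).comp κ.continuous
  (integral_bindProba _ κ hf).trans (integral_emp hN x hcont.stronglyMeasurable)

theorem continuous_emp {X : Type*} [TopologicalSpace X] [CompactSpace X] [MeasurableSpace X]
    [OpensMeasurableSpace X] [Nonempty X] (N : ℕ) :
    Continuous fun x : Fin N → X => emp N x := by
  rcases eq_or_ne N 0 with rfl | hN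
  · exact continuous_of_const fun x y => congrArg _ (Subsingleton.elim x y)
  · refine ProbabilityMeasure.continuous_iff_forall_continuousMap_continuous_integral.2 fun f => ?_
    simp_rw [integral_emp hN _ f.continuous.stronglyMeasurable]
    fun_prop

theorem eventually_integral_dist_emp_le {X : Type*} [PseudoMetricSpace X] [CompactSpace X]
    [MeasurableSpace X] [BorelSpace X] [Nonempty X] {η : ℝ} (hη : 0 < η) :
    ∀ᶠ N : ℕ in atTop, ∀ (q : Fin N → ProbabilityMeasure X) (ν : ProbabilityMeasure X),
      (∀ f : X → ℝ, Continuous f →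
        ∫ x, f x ∂(ν : Measure X) = (N : ℝ)⁻¹ * ∑ i, ∫ x, f x ∂(q i : Measure X)) →
      ∫ y, dist (emp N y) ν ∂(ProbabilityMeasure.pi q : Measure (Fin N → X)) ≤ η := by
  obtain ⟨F, hFlip, hF⟩ := exists_finset_W1_le (X := X) (half_pos hη)
  have hlim : Tendsto (fun N : ℕ => F.card * (Metric.diam (univ : Set X) / √N)) atTop (𝓝 0) := by
    simpa using ((Real.tendsto_sqrt_atTop.comp tendsto_natCast_atTop_atTop).const_div_atTop
      (Metric.diam (univ : Set X))).const_mul (F.card : ℝ)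
  filter_upwards [hlim.eventually_le_const (half_pos hη), eventually_ne_atTop 0]
    with N hN hN0 q ν hν
  have : NeZero N := ⟨hN0⟩
  have htest (f : C(X, ℝ)) (hf : LipschitzWith 1 f) :
      ∫ y, |∫ x, f x ∂(emp N y : Measure X) - ∫ x, f x ∂(ν : Measure X)|
        ∂(ProbabilityMeasure.pi q : Measure (Fin N → X)) ≤ Metric.diam (univ : Set X) / √N := by
    let a := Classical.arbitrary X
    have hfa (x : X) : f x ∈ Icc (f a - Metric.diam (univ : Set X))
        (f a + Metric.diam (univ : Set X)) := by
      have := abs_le.1 ((lipschitzWith_one_iff_abs_sub_le.1 hf x a).trans (dist_le_diam_univ x a))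
      exact ⟨by linarith, by linarith⟩
    have h := integral_abs_average_sub_average_le (fun i => (q i : Measure X))
      f.continuous.measurable hfa
    simp only [Fintype.card_fin] at h
    simp_rw [integral_emp hN0 _ f.continuous.stronglyMeasurable, hν f f.continuous]
    exact h.trans_eq (by ring)
  have hint (f : C(X, ℝ)) : Continuous fun y : Fin N → X =>
      |∫ x, f x ∂(emp N y : Measure X) - ∫ x, f x ∂(ν : Measure X)| :=
    (((continuous_integral_of_continuous f.continuous).comp (continuous_emp N)).sub
      continuous_const).abs
  calc _ ≤ ∫ y, (η / 2 + ∑ f ∈ F, |∫ x, f x ∂(emp N y : Measure X) - ∫ x, f x ∂(ν : Measure X)|)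
        ∂(ProbabilityMeasure.pi q : Measure (Fin N → X)) :=
        integral_mono_of_nonneg (.of_forall fun _ => dist_nonneg)
          (integrable_of_continuous
            (continuous_const.add (continuous_finsetSum _ fun f _ => hint f)))
          (.of_forall fun y => hF _ _)
    _ ≤ η / 2 + ∑ _f ∈ F, Metric.diam (univ : Set X) / √N := by
        rw [integral_add (integrable_const _) (integrable_finsetSum _ fun f _ =>
          integrable_of_continuous (hint f)), integral_finsetSum _ fun f _ =>
          integrable_of_continuous (hint f)]
        simpa using Finset.sum_le_sum fun f hf => htest f (hFlip f hf)
    _ ≤ η := by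
        rw [Finset.sum_const, nsmul_eq_mul]
        linarith

end Empirical

section Attach
variable {A B Y : Type*} [PseudoMetricSpace A] [CompactSpace A] [MeasurableSpace A] [BorelSpace A]
  [PseudoMetricSpace B] [CompactSpace B] [MeasurableSpace B] [BorelSpace B]
  [PseudoMetricSpace Y] [CompactSpace Y] [MeasurableSpace Y] [BorelSpace Y]

/-- The kernel sampling the joint action of a policy `φ`: it sends `(y, b)` to the law of
`(y, a, b)`, where `a` is drawn from `φ (y, b)`. -/
noncomputable def attach (φ : C(Y × B, ProbabilityMeasure A)) :
    C(Y × B, ProbabilityMeasure (Y × A × B)) :=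
  bindKernel φ
    ⟨fun z => diracProba (z.1.1, z.2, z.1.2), continuous_diracProba.comp (by fun_prop)⟩

theorem toMeasure_attach (φ : C(Y × B, ProbabilityMeasure A)) (y : Y) (b : B) :
    (attach φ (y, b) : Measure (Y × A × B)) =
      (φ (y, b) : Measure A).map fun a => (y, a, b) :=
  Measure.bind_dirac_eq_map _ (by fun_prop)

theorem lipschitzWith_attach {φ : C(Y × B, ProbabilityMeasure A)} {K : ℝ≥0}
    (hφ : LipschitzWith K φ) : LipschitzWith (1 + K) (attach φ) := by
  have hswap : LipschitzWith 1 fun z : (Y × B) × A => (z.1.1, z.2, z.1.2) :=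
    .of_dist_le_mul fun z w => by
      simp only [Prod.dist_eq, NNReal.coe_one, one_mul, max_assoc, max_comm (dist z.2 w.2), le_refl]
  have h := lipschitzWith_bindKernel hφ (κ := ⟨_, continuous_diracProba.comp hswap.continuous⟩)
    (lipschitzWith_diracProba.comp hswap)
  rwa [one_mul, one_mul] at h

theorem map_attach {B' : Type*} [PseudoMetricSpace B'] [CompactSpace B'] [MeasurableSpace B']
    [BorelSpace B'] (φ : C(Y × B, ProbabilityMeasure A)) (g : C(B', B)) (y : Y) (b : B') :
    (attach (φ.comp ((ContinuousMap.id Y).prodMap g)) (y, b)).map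
      ((ContinuousMap.id Y).prodMap ((ContinuousMap.id A).prodMap g)).measurable.aemeasurable =
      attach φ (y, g b) := by
  exact Subtype.ext ((congrArg (Measure.map _) (toMeasure_attach _ y b)).trans
    ((Measure.map_map (ContinuousMap.measurable _) (by fun_prop)).trans
      (toMeasure_attach φ y (g b)).symm))

end Attach

section MarkovLaw

/-- The law at time `t` of the Markov chain with transition kernel `κ` and initial law `ι`. -/
noncomputable def markovLaw {E : Type*} [TopologicalSpace E] [HasOuterApproxClosed E]
    [MeasurableSpace E] [BorelSpace E] (ι : ProbabilityMeasure E)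
    (κ : C(E, ProbabilityMeasure E)) : ℕ → ProbabilityMeasure E
  | 0 => ι
  | t + 1 => bindProba (markovLaw ι κ t) κ

/-- A projection `e` that almost intertwines two chains keeps their laws close: the one-step error
is amplified at each step by the Lipschitz constant of the target kernel. -/
theorem dist_map_markovLaw_le {E S : Type*} [TopologicalSpace E] [CompactSpace E]
    [HasOuterApproxClosed E] [MeasurableSpace E] [BorelSpace E] [PseudoMetricSpace S]
    [CompactSpace S] [MeasurableSpace S] [BorelSpace S] {ι : ProbabilityMeasure E}
    {κ : C(E, ProbabilityMeasure E)} {ι' : ProbabilityMeasure S} {κ' : C(S, ProbabilityMeasure S)}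
    {R : ℝ≥0} (hκ' : LipschitzWith R κ') (e : C(E, S)) {δ : ℝ}
    (hι : dist (ι.map e.measurable.aemeasurable) ι' ≤ δ)
    (hκ : ∀ x, dist ((κ x).map e.measurable.aemeasurable) (κ' (e x)) ≤ δ) (t : ℕ) :
    dist ((markovLaw ι κ t).map e.measurable.aemeasurable) (markovLaw ι' κ' t) ≤
      (∑ i ∈ Finset.range (t + 1), (R : ℝ) ^ i) * δ := by
  induction t with
  | zero => simpa [markovLaw] using hι
  | succ t ih =>
    let κe : C(E, ProbabilityMeasure S) := ⟨fun x => (κ x).map e.measurable.aemeasurable,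
      (ProbabilityMeasure.continuous_map e.continuous).comp κ.continuous⟩
    have herr : ∫ x, dist (κe x) (κ' (e x)) ∂(markovLaw ι κ t : Measure E) ≤ δ := by
      have hcont : Continuous fun x => dist (κe x) (κ' (e x)) := by fun_prop
      simpa using integral_mono (μ := (markovLaw ι κ t : Measure E))
        (integrable_of_continuous hcont) (integrable_const δ) hκ
    calc _ = dist (bindProba (markovLaw ι κ t) κe) (bindProba (markovLaw ι' κ' t) κ') :=
          congrArg (dist · _) (map_bindProba _ κ e)
      _ ≤ δ + R * ((∑ i ∈ Finset.range (t + 1), (R : ℝ) ^ i) * δ) :=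
          (dist_bindProba_le _ κe _ hκ' e).trans
            (add_le_add herr (mul_le_mul_of_nonneg_left ih R.coe_nonneg))
      _ = _ := by
          rw [geom_sum_succ (n := t + 1)]
          ring

end MarkovLaw

theorem tendstoUniformly_tsum_of_dominated {ι I T E : Type*} [NormedAddCommGroup E]
    [CompleteSpace E] {l : Filter ι} {f : T → ι → I → E} {g : T → I → E} {u : T → ℝ}
    (hu : Summable u) (hf : ∀ t n i, ‖f t n i‖ ≤ u t) (hg : ∀ t i, ‖g t i‖ ≤ u t)
    (h : ∀ t, TendstoUniformly (f t) (g t) l) :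
    TendstoUniformly (fun n i => ∑' t, f t n i) (fun i => ∑' t, g t i) l := by
  have hdiff : Tendsto (fun q : ι × I => ∑' t, (g t q.2 - f t q.1 q.2)) (l ×ˢ ⊤)
      (𝓝 (∑' _ : T, (0 : E))) := by
    refine tendsto_tsum_of_dominated_convergence (hu.add hu) (fun t => ?_)
      (.of_forall fun q t => (norm_sub_le _ _).trans (add_le_add (hg t q.2) (hf t q.1 q.2)))
    rw [tendsto_zero_iff_norm_tendsto_zero]
    simpa only [tendstoUniformly_iff_tendsto, Metric.uniformity_eq_comap_nhds_zero,
      tendsto_comap_iff, dist_eq_norm, Function.comp_def] using h t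
  rw [tsum_zero, tendsto_zero_iff_norm_tendsto_zero] at hdiff
  rw [tendstoUniformly_iff_tendsto, Metric.uniformity_eq_comap_nhds_zero, tendsto_comap_iff]
  refine hdiff.congr fun q => ?_
  rw [Function.comp_apply, dist_eq_norm, Summable.tsum_sub
    (.of_norm_bounded hu fun t => hg t q.2) (.of_norm_bounded hu fun t => hf t q.1 q.2)]

section MeanField
variable {X Y A : Type*}
  [MetricSpace X] [CompactSpace X] [MeasurableSpace X] [BorelSpace X]
  [PseudoMetricSpace Y] [CompactSpace Y] [MeasurableSpace Y] [BorelSpace Y]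
  [PseudoMetricSpace A]
  (q : C((Y × A × ProbabilityMeasure X) × X, ProbabilityMeasure X))
  (q0 : C(Y × A × ProbabilityMeasure X, ProbabilityMeasure Y))

/-- The mean field transition: from the major state, joint action and mean field `s = (y, a, μ)`,
a minor agent in state `x` moves according to `q (s, x)`, so the mean field becomes
`∫ q (s, x) dμ(x)`. -/
noncomputable def meanFieldStep : C(Y × A × ProbabilityMeasure X, ProbabilityMeasure X) :=
  bindKernel ⟨fun s => s.2.2, by fun_prop⟩ q

section Empirical
variable [Nonempty X]

/-- The empirical measure as a continuous map. -/
noncomputable def empMap (N : ℕ) : C(Fin N → X, ProbabilityMeasure X) :=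
  ⟨emp N, continuous_emp N⟩

/-- The projection `(y, a, x) ↦ (y, a, μ)` of the `N`-agent state space onto the state space of
the limiting process, where `μ` is the empirical measure of `x`. -/
noncomputable def empState (N : ℕ) : C(Y × A × (Fin N → X), Y × A × ProbabilityMeasure X) :=
  (ContinuousMap.id Y).prodMap ((ContinuousMap.id A).prodMap (empMap N))

/-- The joint law of the next states of the major agent and of the `N` minor agents, which are
independent given the current state. -/
noncomputable def jointStep (N : ℕ) :
    C(Y × A × (Fin N → X), ProbabilityMeasure (Y × (Fin N → X))) where
  toFun s := (q0 (empState N s)).prod (.pi fun i => q (empState N s, s.2.2 i))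
  continuous_toFun := ProbabilityMeasure.continuous_prod.comp
    (.prodMk (by fun_prop) (ProbabilityMeasure.continuous_pi.comp (by fun_prop)))

theorem eventually_integral_dist_emp_jointStep_le {η : ℝ} (hη : 0 < η) :
    ∀ᶠ N : ℕ in atTop, ∀ s : Y × A × (Fin N → X),
      ∫ y, dist (emp N y.2) (meanFieldStep q (empState N s))
        ∂(jointStep q q0 N s : Measure (Y × (Fin N → X))) ≤ η := by
  filter_upwards [eventually_integral_dist_emp_le (X := X) hη, eventually_ne_atTop 0]
    with N hLLN hN s
  have hsnd : (jointStep q q0 N s).map ContinuousMap.snd.measurable.aemeasurable =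
      .pi fun i => q (empState N s, s.2.2 i) := ProbabilityMeasure.map_snd_prod _ _
  have hcont : Continuous fun y => dist (emp N y) (meanFieldStep q (empState N s)) :=
    (continuous_emp N).dist continuous_const
  calc _ = ∫ y, dist (emp N y) (meanFieldStep q (empState N s))
        ∂((jointStep q q0 N s).map ContinuousMap.snd.measurable.aemeasurable :
          Measure (Fin N → X)) :=
        (integral_map ContinuousMap.snd.measurable.aemeasurable hcont.aestronglyMeasurable).symm
    _ ≤ η := by
        rw [hsnd]
        exact hLLN _ _ fun f hf => integral_bindProba_emp hN s.2.2 (q.curry (empState N s)) hf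

end Empirical

variable [CompactSpace A] [MeasurableSpace A] [BorelSpace A]
  (π : C(Y × ProbabilityMeasure X, ProbabilityMeasure A))

/-- The transition kernel of the limiting process `(y, a, μ)`, in which the major agent moves
according to `q0` and the next joint action is drawn from the policy `π`. -/
noncomputable def limitKernel :
    C(Y × A × ProbabilityMeasure X, ProbabilityMeasure (Y × A × ProbabilityMeasure X)) :=
  bindKernel q0 ((attach π).comp ⟨fun z => (z.2, meanFieldStep q z.1), by fun_prop⟩)

variable {q q0} in
theorem exists_lipschitzWith_limitKernel {Kq K0 : ℝ≥0} (hq : LipschitzWith Kq q)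
    (hq0 : LipschitzWith K0 q0) (K : ℝ≥0) :
    ∃ R, ∀ π : C(Y × ProbabilityMeasure X, ProbabilityMeasure A), LipschitzWith K π →
      LipschitzWith R (limitKernel q q0 π) := by
  refine ⟨_, fun π hπ => lipschitzWith_bindKernel hq0 ((lipschitzWith_attach hπ).comp
    (LipschitzWith.prod_snd.prodMk (.comp (Kf := Kq + Kq * (1 * 1)) ?_ LipschitzWith.prod_fst)))⟩
  exact lipschitzWith_bindKernel (LipschitzWith.prod_snd.comp LipschitzWith.prod_snd) hq

variable [Nonempty X]

/-- The transition kernel of the `N`-agent system `(y, a, (xⁱ)ᵢ)`. -/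
noncomputable def nAgentKernel (N : ℕ) :
    C(Y × A × (Fin N → X), ProbabilityMeasure (Y × A × (Fin N → X))) :=
  bindKernel (jointStep q q0 N)
    ((attach (π.comp ((ContinuousMap.id Y).prodMap (empMap N)))).comp .snd)

theorem eventually_dist_map_nAgentKernel_le (K : ℝ≥0) {η : ℝ} (hη : 0 < η) :
    ∀ᶠ N : ℕ in atTop, ∀ π : C(Y × ProbabilityMeasure X, ProbabilityMeasure A), LipschitzWith K π →
      ∀ s, dist ((nAgentKernel q q0 π N s).map (empState N).measurable.aemeasurable)
        (limitKernel q q0 π (empState N s)) ≤ η := by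
  filter_upwards [eventually_integral_dist_emp_jointStep_le (A := A) q q0
    (η := η / (1 + K)) (by positivity)] with N hLLN π hπ s
  let ν := meanFieldStep q (empState N s)
  let κN : C(Y × (Fin N → X), ProbabilityMeasure (Y × A × ProbabilityMeasure X)) :=
    (attach π).comp ((ContinuousMap.id Y).prodMap (empMap N))
  let κ : C(Y, ProbabilityMeasure (Y × A × ProbabilityMeasure X)) :=
    (attach π).comp ⟨fun y => (y, ν), by fun_prop⟩
  have hκ : LipschitzWith (1 + K) κ :=
    mul_one (1 + K) ▸ (lipschitzWith_attach hπ).comp (LipschitzWith.prodMk_right ν)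
  have hmap : (nAgentKernel q q0 π N s).map (empState N).measurable.aemeasurable =
      bindProba (jointStep q q0 N s) κN :=
    (map_bindProba _ _ _).trans (congrArg (bindProba _)
      (ContinuousMap.ext fun y => map_attach π (empMap N) y.1 y.2))
  have hfst : (jointStep q q0 N s).map ContinuousMap.fst.measurable.aemeasurable =
      q0 (empState N s) := ProbabilityMeasure.map_fst_prod _ _
  have hκN (y : Y × (Fin N → X)) : dist (κN y) (κ y.1) ≤ (1 + K) * dist (emp N y.2) ν :=
    ((lipschitzWith_attach hπ).dist_le_mul (y.1, emp N y.2) (y.1, ν)).trans_eq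
      (by rw [dist_prod_same_left, NNReal.coe_add, NNReal.coe_one])
  have hbind := dist_bindProba_le (jointStep q q0 N s) κN (q0 (empState N s)) hκ .fst
  rw [hfst, dist_self, mul_zero, add_zero] at hbind
  have hemp : Continuous fun y : Y × (Fin N → X) => dist (emp N y.2) ν :=
    ((continuous_emp N).comp continuous_snd).dist continuous_const
  calc _ = dist (bindProba (jointStep q q0 N s) κN) (bindProba (q0 (empState N s)) κ) :=
        congrArg (dist · _) hmap
    _ ≤ ∫ y, (1 + K) * dist (emp N y.2) ν ∂(jointStep q q0 N s : Measure (Y × (Fin N → X))) :=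
        hbind.trans (integral_mono (integrable_of_continuous (by fun_prop))
          (integrable_of_continuous (continuous_const.mul hemp)) hκN)
    _ ≤ η := by
        rw [integral_const_mul, ← le_div_iff₀' (by positivity)]
        exact hLLN s

/-- The initial law of the `N`-agent system in the definition of the action value at
`s = (y, a, μ)`: the initial states of the minor agents are independent samples of `μ`. -/
noncomputable def initialLaw (N : ℕ) (s : Y × A × ProbabilityMeasure X) :
    ProbabilityMeasure (Y × A × (Fin N → X)) :=
  (ProbabilityMeasure.pi fun _ => s.2.2).map (f := fun x => (s.1, s.2.1, x))
    (Measurable.aemeasurable (by fun_prop))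

theorem eventually_dist_map_initialLaw_le {η : ℝ} (hη : 0 < η) :
    ∀ᶠ N : ℕ in atTop, ∀ s : Y × A × ProbabilityMeasure X,
      dist ((initialLaw N s).map (empState N).measurable.aemeasurable) (diracProba s) ≤ η := by
  filter_upwards [eventually_integral_dist_emp_le (X := X) hη, eventually_ne_atTop 0]
    with N hLLN hN s
  refine (dist_diracProba_le _ s).trans ?_
  have hmap : ((initialLaw N s).map (empState N).measurable.aemeasurable : Measure _) =
      (ProbabilityMeasure.pi fun _ : Fin N => s.2.2 : Measure (Fin N → X)).map
        fun x => (s.1, s.2.1, emp N x) :=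
    Measure.map_map (empState N).measurable (by fun_prop)
  have hcont : Continuous fun x : Fin N → X => (s.1, s.2.1, emp N x) :=
    continuous_const.prodMk (continuous_const.prodMk (continuous_emp N))
  rw [hmap, integral_map hcont.measurable.aemeasurable
    (Continuous.aestronglyMeasurable (by fun_prop))]
  refine (integral_congr_ae (.of_forall fun x => ?_)).trans_le
    (hLLN (fun _ => s.2.2) s.2.2 fun f _ => ?_)
  · exact dist_prod_same_left.trans dist_prod_same_left
  · simp [hN]

variable {q q0} in
theorem eventually_dist_map_markovLaw_le {Kq K0 : ℝ≥0} (hq : LipschitzWith Kq q)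
    (hq0 : LipschitzWith K0 q0) (K : ℝ≥0) (t : ℕ) {η : ℝ} (hη : 0 < η) :
    ∀ᶠ N : ℕ in atTop, ∀ π : C(Y × ProbabilityMeasure X, ProbabilityMeasure A), LipschitzWith K π →
      ∀ s, dist ((markovLaw (initialLaw N s) (nAgentKernel q q0 π N) t).map
          (empState N).measurable.aemeasurable)
        (markovLaw (diracProba s) (limitKernel q q0 π) t) ≤ η := by
  obtain ⟨R, hR⟩ := exists_lipschitzWith_limitKernel (A := A) hq hq0 K
  have hsum : 0 < ∑ i ∈ Finset.range (t + 1), (R : ℝ) ^ i := by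
    rw [geom_sum_succ]; positivity
  filter_upwards [eventually_dist_map_nAgentKernel_le q q0 K (div_pos hη hsum),
    eventually_dist_map_initialLaw_le (X := X) (Y := Y) (A := A) (div_pos hη hsum)]
    with N hstep hinit π hπ s
  exact (dist_map_markovLaw_le (hR π hπ) (empState N) (hinit s) (hstep π hπ) t).trans_eq
    (mul_div_cancel₀ η hsum.ne')

variable {q q0} in
theorem tendstoUniformly_actionValue {Θ : Type*}
    {π : Θ → C(Y × ProbabilityMeasure X, ProbabilityMeasure A)} {Kq K0 K Kr : ℝ≥0}
    (hq : LipschitzWith Kq q) (hq0 : LipschitzWith K0 q0) (hπ : ∀ θ, LipschitzWith K (π θ))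
    {r : Y × A × ProbabilityMeasure X → ℝ} (hr : LipschitzWith Kr r) {γ : ℝ} (hγ0 : 0 ≤ γ)
    (hγ1 : γ < 1) :
    TendstoUniformly (fun (N : ℕ) (z : Θ × Y × A × ProbabilityMeasure X) => ∑' t, γ ^ t *
        ∫ s, r (empState N s) ∂(markovLaw (initialLaw N z.2) (nAgentKernel q q0 (π z.1) N) t :
          Measure (Y × A × (Fin N → X))))
      (fun z => ∑' t, γ ^ t * ∫ s, r s ∂(markovLaw (diracProba z.2) (limitKernel q q0 (π z.1)) t :
          Measure (Y × A × ProbabilityMeasure X))) atTop := by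
  let B := ‖(⟨r, hr.continuous⟩ : C(Y × A × ProbabilityMeasure X, ℝ))‖
  have hB (s) : ‖r s‖ ≤ B := ContinuousMap.norm_coe_le_norm ⟨r, hr.continuous⟩ s
  have hbound {E : Type _} [MeasurableSpace E] (m : ProbabilityMeasure E)
      (e : E → Y × A × ProbabilityMeasure X) (t : ℕ) :
      ‖γ ^ t * ∫ s, r (e s) ∂(m : Measure E)‖ ≤ γ ^ t * B := by
    rw [norm_mul, Real.norm_of_nonneg (pow_nonneg hγ0 t)]
    gcongr
    simpa using norm_integral_le_of_norm_le_const (μ := (m : Measure E))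
      (.of_forall fun s => hB (e s))
  refine tendstoUniformly_tsum_of_dominated
    ((summable_geometric_of_lt_one hγ0 hγ1).mul_right B)
    (fun t N z => hbound _ (empState N) t) (fun t z => hbound _ id t) fun t => ?_
  refine Metric.tendstoUniformly_iff.2 fun ε hε => ?_
  filter_upwards [eventually_dist_map_markovLaw_le hq hq0 K t
    (η := ε / (γ ^ t * Kr + 1)) (by positivity)] with N hN z
  have hmap : ∫ s, r (empState N s) ∂(markovLaw (initialLaw N z.2) (nAgentKernel q q0 (π z.1) N) t :
      Measure (Y × A × (Fin N → X))) = ∫ s, r s ∂((markovLaw (initialLaw N z.2)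
        (nAgentKernel q q0 (π z.1) N) t).map (empState N).measurable.aemeasurable : Measure _) :=
    (integral_map (empState N).measurable.aemeasurable hr.continuous.aestronglyMeasurable).symm
  rw [hmap, Real.dist_eq, ← mul_sub, abs_mul, abs_of_nonneg (pow_nonneg hγ0 t), abs_sub_comm]
  calc _ ≤ γ ^ t * (Kr * (ε / (γ ^ t * Kr + 1))) := by
        gcongr
        exact ((lipschitzWith_integral hr).dist_le_mul _ _).trans
          (mul_le_mul_of_nonneg_left (hN (π z.1) (hπ z.1) z.2) Kr.coe_nonneg)
    _ < ε := by
        rw [← mul_assoc, mul_div_assoc', div_lt_iff₀ (by positivity)]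
        linarith

end MeanField

section M3FC
variable {X U X0 U0 Xi Θ : Type*}
  [MetricSpace X] [CompactSpace X] [MeasurableSpace X] [BorelSpace X]
  [PseudoMetricSpace U] [CompactSpace U] [MeasurableSpace U] [BorelSpace U]
  [PseudoMetricSpace X0] [PseudoMetricSpace U0] [PseudoMetricSpace Xi]
  (p : C(X × U × X0 × U0 × ProbabilityMeasure X, ProbabilityMeasure X))
  (Γ : C(Xi × X, ProbabilityMeasure U))

/-- The transition kernel of a single minor agent in state `x`, given `s = (x⁰, (u⁰, ξ), μ)`: its
action is drawn from `Γ (ξ, x)`, then its next state from `p`. -/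
noncomputable def minorStep :
    C((X0 × (U0 × Xi) × ProbabilityMeasure X) × X, ProbabilityMeasure X) :=
  bindKernel (Γ.comp ⟨fun z => (z.1.2.1.2, z.2), by fun_prop⟩)
    (p.comp ⟨fun z => (z.1.2, z.2, z.1.1.1, z.1.1.2.1.1, z.1.1.2.2), by fun_prop⟩)

variable {p Γ} in
theorem exists_lipschitzWith_minorStep {Kp KΓ : ℝ≥0} (hp : LipschitzWith Kp p)
    (hΓ : LipschitzWith KΓ Γ) :
    ∃ K, LipschitzWith K (minorStep p Γ) := by
  have hs : LipschitzWith 1 fun z : (X0 × (U0 × Xi) × ProbabilityMeasure X) × X => z.1 := .prod_fst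
  have hx : LipschitzWith 1 fun z : (X0 × (U0 × Xi) × ProbabilityMeasure X) × X => z.2 := .prod_snd
  have ha := LipschitzWith.prod_fst.comp (LipschitzWith.prod_snd.comp hs)
  have hμ := LipschitzWith.prod_snd.comp (LipschitzWith.prod_snd.comp hs)
  exact ⟨_, lipschitzWith_bindKernel (hΓ.comp ((LipschitzWith.prod_snd.comp ha).prodMk hx))
    (hp.comp ((hx.comp .prod_fst).prodMk (LipschitzWith.prod_snd.prodMk
      (((LipschitzWith.prod_fst.comp hs).prodMk ((LipschitzWith.prod_fst.comp ha).prodMk hμ)).comp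
        .prod_fst))))⟩

variable [CompactSpace X0] [MeasurableSpace X0] [BorelSpace X0]
  (p0 : C(X0 × U0 × ProbabilityMeasure X, ProbabilityMeasure X0))

/-- The transition kernel `p0` of the major agent, as a function of `(x⁰, (u⁰, ξ), μ)`. -/
noncomputable def majorStep : C(X0 × (U0 × Xi) × ProbabilityMeasure X, ProbabilityMeasure X0) :=
  p0.comp ⟨fun s => (s.1, s.2.1.1, s.2.2), by fun_prop⟩

variable {p0} in
theorem exists_lipschitzWith_majorStep {Kp0 : ℝ≥0} (hp0 : LipschitzWith Kp0 p0) :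
    ∃ K, LipschitzWith K (majorStep (Xi := Xi) p0) :=
  ⟨_, hp0.comp (LipschitzWith.prod_fst.prodMk ((LipschitzWith.prod_fst.comp
    (LipschitzWith.prod_fst.comp .prod_snd)).prodMk (LipschitzWith.prod_snd.comp .prod_snd)))⟩

variable [CompactSpace U0] [MeasurableSpace U0] [BorelSpace U0]
  [CompactSpace Xi] [MeasurableSpace Xi] [BorelSpace Xi]
  (π : Θ → C(X0 × ProbabilityMeasure X, ProbabilityMeasure (U0 × Xi)))

theorem pLimLawFrom_eq_markovLaw {TG : X0 → U0 → Xi → ProbabilityMeasure X → ProbabilityMeasure X}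
    (hTG : ∀ x0 u0 ξ μ, (TG x0 u0 ξ μ : Measure X) = (μ : Measure X).bind fun x =>
      (Γ (ξ, x) : Measure U).bind fun u => (p (x, u, x0, u0, μ) : Measure X)) (θ : Θ)
    (ι : ProbabilityMeasure (X0 × (U0 × Xi) × ProbabilityMeasure X)) (t : ℕ) :
    pLimLawFrom (fun x0 u0 μ => p0 (x0, u0, μ)) (fun θ x0 μ => π θ (x0, μ)) TG θ ι t =
      (markovLaw ι (limitKernel (Y := X0) (A := U0 × Xi) (minorStep p Γ) (majorStep p0) (π θ)) t :
        Measure (X0 × (U0 × Xi) × ProbabilityMeasure X)) := by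
  have hTG' (s : X0 × (U0 × Xi) × ProbabilityMeasure X) :
      TG s.1 s.2.1.1 s.2.1.2 s.2.2 = meanFieldStep (Y := X0) (A := U0 × Xi) (minorStep p Γ) s :=
    Subtype.ext (hTG s.1 s.2.1.1 s.2.1.2 s.2.2)
  induction t with
  | zero => rfl
  | succ t ih =>
    simp only [pLimLawFrom, ih, markovLaw, toMeasure_bindProba]
    refine congrArg _ (funext fun s => ?_)
    simp only [hTG']
    refine congrArg _ (funext fun y => ?_)
    exact (toMeasure_attach (π θ) y _).symm

variable [Nonempty X]

theorem pLawNFrom_eq_markovLaw (θ : Θ) (N : ℕ)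
    (ι : ProbabilityMeasure (X0 × (U0 × Xi) × (Fin N → X))) (t : ℕ) :
    pLawNFrom (fun x u x0 u0 μ => p (x, u, x0, u0, μ)) (fun x0 u0 μ => p0 (x0, u0, μ))
        (fun ξ x => Γ (ξ, x)) (fun θ x0 μ => π θ (x0, μ)) θ N ι t =
      (markovLaw ι
        (nAgentKernel (Y := X0) (A := U0 × Xi) (minorStep p Γ) (majorStep p0) (π θ) N) t :
        Measure (X0 × (U0 × Xi) × (Fin N → X))) := by
  induction t with
  | zero => rfl
  | succ t ih =>
    rw [pLawNFrom, ih, markovLaw, toMeasure_bindProba]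
    refine congrArg _ (funext fun s => ?_)
    have hjoint : ((p0 (s.1, s.2.1.1, emp N s.2.2) : Measure X0).prod
        (Measure.pi fun i => (Γ (s.2.1.2, s.2.2 i) : Measure U).bind fun u =>
          (p (s.2.2 i, u, s.1, s.2.1.1, emp N s.2.2) : Measure X))) =
        jointStep (A := U0 × Xi) (minorStep p Γ) (majorStep p0) N s := rfl
    rw [hjoint]
    refine congrArg _ (funext fun y => ?_)
    exact (toMeasure_attach ((π θ).comp ((ContinuousMap.id X0).prodMap (empMap N))) y.1 y.2).symm

variable {p Γ p0 π} in
theorem tendstoUniformly_tsum_integral_pLawNFrom {Kp Kp0 KΓ Kπ Kr : ℝ≥0} (hp : LipschitzWith Kp p)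
    (hp0 : LipschitzWith Kp0 p0) (hΓ : LipschitzWith KΓ Γ) (hπ : ∀ θ, LipschitzWith Kπ (π θ))
    {r : X0 × U0 × ProbabilityMeasure X → ℝ} (hr : LipschitzWith Kr r)
    {TG : X0 → U0 → Xi → ProbabilityMeasure X → ProbabilityMeasure X}
    (hTG : ∀ x0 u0 ξ μ, (TG x0 u0 ξ μ : Measure X) = (μ : Measure X).bind fun x =>
      (Γ (ξ, x) : Measure U).bind fun u => (p (x, u, x0, u0, μ) : Measure X))
    {γ : ℝ} (hγ0 : 0 ≤ γ) (hγ1 : γ < 1) :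
    TendstoUniformly
      (fun (N : ℕ) (z : Θ × X0 × (U0 × Xi) × ProbabilityMeasure X) => ∑' t, γ ^ t *
        ∫ s, r (s.1, s.2.1.1, emp N s.2.2) ∂(pLawNFrom (fun x u x0 u0 μ => p (x, u, x0, u0, μ))
          (fun x0 u0 μ => p0 (x0, u0, μ)) (fun ξ x => Γ (ξ, x)) (fun θ x0 μ => π θ (x0, μ)) z.1 N
          ((Measure.pi fun _ : Fin N => (z.2.2.2 : Measure X)).map
            fun x => (z.2.1, z.2.2.1, x)) t))
      (fun z => ∑' t, γ ^ t * ∫ s, r (s.1, s.2.1.1, s.2.2) ∂(pLimLawFrom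
        (fun x0 u0 μ => p0 (x0, u0, μ)) (fun θ x0 μ => π θ (x0, μ)) TG z.1
        (Measure.dirac z.2) t)) atTop := by
  obtain ⟨Kq, hq⟩ := exists_lipschitzWith_minorStep hp hΓ
  obtain ⟨K0, hq0⟩ := exists_lipschitzWith_majorStep (Xi := Xi) hp0
  obtain ⟨K', hr'⟩ : ∃ K', LipschitzWith K'
      fun s : X0 × (U0 × Xi) × ProbabilityMeasure X => r (s.1, s.2.1.1, s.2.2) :=
    ⟨_, hr.comp (LipschitzWith.prod_fst.prodMk ((LipschitzWith.prod_fst.comp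
      (LipschitzWith.prod_fst.comp .prod_snd)).prodMk (LipschitzWith.prod_snd.comp .prod_snd)))⟩
  have hN (z : Θ × X0 × (U0 × Xi) × ProbabilityMeasure X) (N t : ℕ) :=
    pLawNFrom_eq_markovLaw p Γ p0 π z.1 N (initialLaw N z.2) t
  have hlim (z : Θ × X0 × (U0 × Xi) × ProbabilityMeasure X) (t : ℕ) :=
    pLimLawFrom_eq_markovLaw p Γ p0 π hTG z.1 (diracProba z.2) t
  convert tendstoUniformly_actionValue (Y := X0) (A := U0 × Xi) hq hq0 hπ hr' hγ0 hγ1 using 1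
  · funext N z
    refine tsum_congr fun t => ?_
    rw [← hN z N t]
    rfl
  · funext z
    refine tsum_congr fun t => ?_
    rw [← hlim z t]
    rfl

end M3FC

section SumMetric
variable {α β δ ε : Type*} [PseudoMetricSpace α] [PseudoMetricSpace β] [PseudoMetricSpace δ]
  [PseudoMetricSpace ε]

theorem lipschitzWith_of_dist_le_mul_of_le_mul {f : α → β} {d : α → α → ℝ} {L : ℝ} {n : ℝ≥0}
    (hd0 : ∀ x y, 0 ≤ d x y) (hd : ∀ x y, d x y ≤ n * dist x y)
    (hf : ∀ x y, dist (f x) (f y) ≤ L * d x y) : LipschitzWith (L.toNNReal * n) f :=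
  .of_dist_le_mul fun x y => by
    calc dist (f x) (f y) ≤ L * d x y := hf x y
      _ ≤ L.toNNReal * (n * dist x y) :=
          mul_le_mul (Real.le_coe_toNNReal L) (hd x y) (hd0 x y) (by positivity)
      _ = _ := by rw [NNReal.coe_mul, mul_assoc]

theorem dist_fst_le_dist (x y : α × β) : dist x.1 y.1 ≤ dist x y := le_max_left _ _

theorem dist_snd_le_dist (x y : α × β) : dist x.2 y.2 ≤ dist x y := le_max_right _ _

theorem lipschitzWith_of_dist_le_mul_add₂ {f : α × β → δ} {L : ℝ}
    (hf : ∀ x y, dist (f x) (f y) ≤ L * (dist x.1 y.1 + dist x.2 y.2)) :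
    LipschitzWith (L.toNNReal * 2) f := by
  refine lipschitzWith_of_dist_le_mul_of_le_mul (fun _ _ => by positivity) (fun x y => ?_) hf
  rw [NNReal.coe_ofNat]
  linarith [dist_fst_le_dist x y, dist_snd_le_dist x y]

theorem lipschitzWith_of_dist_le_mul_add₃ {f : α × β × δ → ε} {L : ℝ}
    (hf : ∀ x y, dist (f x) (f y) ≤
      L * (dist x.1 y.1 + dist x.2.1 y.2.1 + dist x.2.2 y.2.2)) :
    LipschitzWith (L.toNNReal * 3) f := by
  refine lipschitzWith_of_dist_le_mul_of_le_mul (fun _ _ => by positivity) (fun x y => ?_) hf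
  rw [NNReal.coe_ofNat]
  linarith [dist_fst_le_dist x y, dist_snd_le_dist x y, dist_fst_le_dist x.2 y.2,
    dist_snd_le_dist x.2 y.2]

theorem lipschitzWith_of_dist_le_mul_add₅ {ζ η : Type*} [PseudoMetricSpace ζ]
    [PseudoMetricSpace η] {f : α × β × δ × ε × ζ → η} {L : ℝ}
    (hf : ∀ x y, dist (f x) (f y) ≤ L * (dist x.1 y.1 + dist x.2.1 y.2.1 + dist x.2.2.1 y.2.2.1
      + dist x.2.2.2.1 y.2.2.2.1 + dist x.2.2.2.2 y.2.2.2.2)) :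
    LipschitzWith (L.toNNReal * 5) f := by
  refine lipschitzWith_of_dist_le_mul_of_le_mul (fun _ _ => by positivity) (fun x y => ?_) hf
  rw [NNReal.coe_ofNat]
  linarith [dist_fst_le_dist x y, dist_snd_le_dist x y, dist_fst_le_dist x.2 y.2,
    dist_snd_le_dist x.2 y.2, dist_fst_le_dist x.2.2 y.2.2, dist_snd_le_dist x.2.2 y.2.2,
    dist_fst_le_dist x.2.2.2 y.2.2.2, dist_snd_le_dist x.2.2.2 y.2.2.2]

theorem dist_le_of_forall_abs_sub_le_dist_add_dist [CompactSpace α] [MeasurableSpace α]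
    [BorelSpace α] [CompactSpace β] [MeasurableSpace β] [BorelSpace β]
    {μ ν : ProbabilityMeasure (α × β)} {c : ℝ}
    (h : ∀ g : α × β → ℝ, (∀ a b, |g a - g b| ≤ dist a.1 b.1 + dist a.2 b.2) →
      |∫ a, g a ∂(μ : Measure (α × β)) - ∫ a, g a ∂(ν : Measure (α × β))| ≤ c) : dist μ ν ≤ c :=
  dist_le_iff_forall_lipschitzWith.2 fun g hg => h g fun a b =>
    (lipschitzWith_one_iff_abs_sub_le.1 hg a b).trans
      (max_le_add_of_nonneg dist_nonneg dist_nonneg)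

end SumMetric

theorem statement18_general {X U X0 U0 Xi Θ : Type*}
    [MetricSpace X] [CompactSpace X] [MeasurableSpace X] [BorelSpace X] [Nonempty X]
    [PseudoMetricSpace U] [CompactSpace U] [MeasurableSpace U] [BorelSpace U]
    [PseudoMetricSpace X0] [CompactSpace X0] [MeasurableSpace X0] [BorelSpace X0]
    [PseudoMetricSpace U0] [CompactSpace U0] [MeasurableSpace U0] [BorelSpace U0]
    [PseudoMetricSpace Xi] [CompactSpace Xi] [MeasurableSpace Xi] [BorelSpace Xi]
    (Lp Lp0 Lr LPi LΓ Lpit : ℝ)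
    (p : X → U → X0 → U0 → ProbabilityMeasure X → ProbabilityMeasure X)
    (hp : ∀ (x x' : X) (u u' : U) (x0 x0' : X0) (u0 u0' : U0)
        (μ μ' : ProbabilityMeasure X) (f : X → ℝ), LipschitzWith 1 f →
      |∫ y, f y ∂(p x u x0 u0 μ : Measure X) - ∫ y, f y ∂(p x' u' x0' u0' μ' : Measure X)|
        ≤ Lp * (dist x x' + dist u u' + dist x0 x0' + dist u0 u0' + W1 μ μ'))
    (p0 : X0 → U0 → ProbabilityMeasure X → ProbabilityMeasure X0)
    (hp0 : ∀ (x0 x0' : X0) (u0 u0' : U0) (μ μ' : ProbabilityMeasure X) (f : X0 → ℝ),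
        LipschitzWith 1 f →
      |∫ y, f y ∂(p0 x0 u0 μ : Measure X0) - ∫ y, f y ∂(p0 x0' u0' μ' : Measure X0)|
        ≤ Lp0 * (dist x0 x0' + dist u0 u0' + W1 μ μ'))
    (r : X0 → U0 → ProbabilityMeasure X → ℝ)
    (hr : ∀ (x0 x0' : X0) (u0 u0' : U0) (μ μ' : ProbabilityMeasure X),
      |r x0 u0 μ - r x0' u0' μ'| ≤ Lr * (dist x0 x0' + dist u0 u0' + W1 μ μ'))
    (Γ : Xi → X → ProbabilityMeasure U)
    (hΓrule : ∀ (ξ : Xi) (x x' : X) (g : U → ℝ), LipschitzWith 1 g →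
      |∫ u, g u ∂(Γ ξ x : Measure U) - ∫ u, g u ∂(Γ ξ x' : Measure U)| ≤ LPi * dist x x')
    (hΓ : ∀ (ξ ξ' : Xi) (x : X) (g : U → ℝ), LipschitzWith 1 g →
      |∫ u, g u ∂(Γ ξ x : Measure U) - ∫ u, g u ∂(Γ ξ' x : Measure U)| ≤ LΓ * dist ξ ξ')
    (pit : Θ → X0 → ProbabilityMeasure X → ProbabilityMeasure (U0 × Xi))
    (hpit : ∀ (θ : Θ) (x0 x0' : X0) (μ μ' : ProbabilityMeasure X) (g : U0 × Xi → ℝ),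
      (∀ a b : U0 × Xi, |g a - g b| ≤ dist a.1 b.1 + dist a.2 b.2) →
      |∫ a, g a ∂(pit θ x0 μ : Measure (U0 × Xi)) - ∫ a, g a ∂(pit θ x0' μ' : Measure (U0 × Xi))|
        ≤ Lpit * (dist x0 x0' + W1 μ μ'))
    (TG : X0 → U0 → Xi → ProbabilityMeasure X → ProbabilityMeasure X)
    (hTG : ∀ (x0 : X0) (u0 : U0) (ξ : Xi) (μ : ProbabilityMeasure X),
      (TG x0 u0 ξ μ : Measure X) = (μ : Measure X).bind fun x =>
        ((Γ ξ x : Measure U)).bind fun u => (p x u x0 u0 μ : Measure X))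
    (γ : ℝ) (hγ0 : 0 ≤ γ) (hγ1 : γ < 1) :
    ∀ ε > (0 : ℝ), ∃ N0 : ℕ, ∀ N ≥ N0, ∀ (θ : Θ) (x0 : X0) (μ : ProbabilityMeasure X)
      (u0 : U0) (ξ : Xi),
      |(∑' t : ℕ, γ ^ t * ∫ s, r s.1 s.2.1.1 (emp N s.2.2)
          ∂(pLawNFrom p p0 Γ pit θ N
            ((Measure.pi fun _ : Fin N => (μ : Measure X)).map
              fun x => (x0, (u0, ξ), x)) t))
        - ∑' t : ℕ, γ ^ t * ∫ s, r s.1 s.2.1.1 s.2.2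
          ∂(pLimLawFrom p0 pit TG θ (Measure.dirac (x0, (u0, ξ), μ)) t)| ≤ ε := by
  have hp' := lipschitzWith_of_dist_le_mul_add₅
    (f := fun z : X × U × X0 × U0 × ProbabilityMeasure X => p z.1 z.2.1 z.2.2.1 z.2.2.2.1 z.2.2.2.2)
    fun _ _ => dist_le_iff_forall_lipschitzWith.2 (hp _ _ _ _ _ _ _ _ _ _)
  have hp0' := lipschitzWith_of_dist_le_mul_add₃
    (f := fun z : X0 × U0 × ProbabilityMeasure X => p0 z.1 z.2.1 z.2.2)
    fun _ _ => dist_le_iff_forall_lipschitzWith.2 (hp0 _ _ _ _ _ _)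
  have hr' := lipschitzWith_of_dist_le_mul_add₃
    (f := fun z : X0 × U0 × ProbabilityMeasure X => r z.1 z.2.1 z.2.2) fun _ _ => hr _ _ _ _ _ _
  have hΓ' : LipschitzWith (LΓ.toNNReal + LPi.toNNReal) fun z : Xi × X => Γ z.1 z.2 :=
    .uncurry (fun x => .of_dist_le' fun ξ ξ' => dist_le_iff_forall_lipschitzWith.2 (hΓ ξ ξ' x))
      fun ξ => .of_dist_le' fun x x' => dist_le_iff_forall_lipschitzWith.2 (hΓrule ξ x x')
  have hpit' (θ : Θ) := lipschitzWith_of_dist_le_mul_add₂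
    (f := fun z : X0 × ProbabilityMeasure X => pit θ z.1 z.2)
    fun _ _ => dist_le_of_forall_abs_sub_le_dist_add_dist (hpit θ _ _ _ _)
  intro ε hε
  obtain ⟨N0, hN0⟩ := eventually_atTop.1 (Metric.tendstoUniformly_iff.1
    (tendstoUniformly_tsum_integral_pLawNFrom (p := ⟨_, hp'.continuous⟩)
      (p0 := ⟨_, hp0'.continuous⟩) (Γ := ⟨_, hΓ'.continuous⟩)
      (π := fun θ => ⟨_, (hpit' θ).continuous⟩) hp' hp0' hΓ' hpit' hr' hTG hγ0 hγ1) ε hε)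
  refine ⟨N0, fun N hN θ x0 μ u0 ξ => ?_⟩
  have h := (hN0 N hN (θ, x0, (u0, ξ), μ)).le
  rwa [dist_comm] at h

/-- uniform convergence of the action-value functions. Under the parametrized
M3FC assumptions, the `N`-agent action-value function
`Q̂^θ(x⁰,μ,u⁰,ξ) = E[Σ_t γ^t r(x⁰ₜ^N,u⁰ₜ^N,μₜ^N) | x⁰₀=x⁰, μ₀=μ, u⁰₀=u⁰, ξ₀=ξ]` converges to
its limiting M3FC MDP counterpart `Q^θ`, uniformly on `𝒳⁰ × 𝒫(𝒳) × 𝒰⁰ × Ξ` and uniformly over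
`θ`, as `N → ∞`. -/
theorem statement18 {X U X0 U0 Xi Θ : Type*}
    [MetricSpace X] [CompactSpace X] [MeasurableSpace X] [BorelSpace X] [Nonempty X]
    [MetricSpace U] [CompactSpace U] [MeasurableSpace U] [BorelSpace U]
    [MetricSpace X0] [CompactSpace X0] [MeasurableSpace X0] [BorelSpace X0]
    [MetricSpace U0] [CompactSpace U0] [MeasurableSpace U0] [BorelSpace U0]
    [MetricSpace Xi] [CompactSpace Xi] [MeasurableSpace Xi] [BorelSpace Xi]
    [NormedAddCommGroup Θ] [NormedSpace ℝ Θ] [CompleteSpace Θ]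
    (Lp Lp0 Lr LPi LΓ Lpit Ls Cs LF : ℝ)
    (p : X → U → X0 → U0 → ProbabilityMeasure X → ProbabilityMeasure X)
    (hp : ∀ (x x' : X) (u u' : U) (x0 x0' : X0) (u0 u0' : U0)
        (μ μ' : ProbabilityMeasure X) (f : X → ℝ), LipschitzWith 1 f →
      |∫ y, f y ∂(p x u x0 u0 μ : Measure X) - ∫ y, f y ∂(p x' u' x0' u0' μ' : Measure X)|
        ≤ Lp * (dist x x' + dist u u' + dist x0 x0' + dist u0 u0' + W1 μ μ'))
    (p0 : X0 → U0 → ProbabilityMeasure X → ProbabilityMeasure X0)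
    (hp0 : ∀ (x0 x0' : X0) (u0 u0' : U0) (μ μ' : ProbabilityMeasure X) (f : X0 → ℝ),
        LipschitzWith 1 f →
      |∫ y, f y ∂(p0 x0 u0 μ : Measure X0) - ∫ y, f y ∂(p0 x0' u0' μ' : Measure X0)|
        ≤ Lp0 * (dist x0 x0' + dist u0 u0' + W1 μ μ'))
    (r : X0 → U0 → ProbabilityMeasure X → ℝ)
    (hr : ∀ (x0 x0' : X0) (u0 u0' : U0) (μ μ' : ProbabilityMeasure X),
      |r x0 u0 μ - r x0' u0' μ'| ≤ Lr * (dist x0 x0' + dist u0 u0' + W1 μ μ'))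
    (Γ : Xi → X → ProbabilityMeasure U)
    (hΓrule : ∀ (ξ : Xi) (x x' : X) (g : U → ℝ), LipschitzWith 1 g →
      |∫ u, g u ∂(Γ ξ x : Measure U) - ∫ u, g u ∂(Γ ξ x' : Measure U)| ≤ LPi * dist x x')
    (hΓ : ∀ (ξ ξ' : Xi) (x : X) (g : U → ℝ), LipschitzWith 1 g →
      |∫ u, g u ∂(Γ ξ x : Measure U) - ∫ u, g u ∂(Γ ξ' x : Measure U)| ≤ LΓ * dist ξ ξ')
    (pit : Θ → X0 → ProbabilityMeasure X → ProbabilityMeasure (U0 × Xi))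
    (hpit : ∀ (θ θ' : Θ) (x0 x0' : X0) (μ μ' : ProbabilityMeasure X) (g : U0 × Xi → ℝ),
      (∀ a b : U0 × Xi, |g a - g b| ≤ dist a.1 b.1 + dist a.2 b.2) →
      |∫ a, g a ∂(pit θ x0 μ : Measure (U0 × Xi))
          - ∫ a, g a ∂(pit θ' x0' μ' : Measure (U0 × Xi))|
        ≤ Lpit * (dist θ θ' + dist x0 x0' + W1 μ μ'))
    (score : Θ → X0 → ProbabilityMeasure X → U0 × Xi → Θ)
    (hscoreB : ∀ θ x0 μ a, ‖score θ x0 μ a‖ ≤ Cs)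
    (hscoreL : ∀ (θ θ' : Θ) (x0 x0' : X0) (μ μ' : ProbabilityMeasure X) (a a' : U0 × Xi),
      ‖score θ x0 μ a - score θ' x0' μ' a'‖
        ≤ Ls * (dist θ θ' + dist x0 x0' + W1 μ μ' + dist a.1 a'.1 + dist a.2 a'.2))
    (μ0 : ProbabilityMeasure X) (x00 : X0)
    (TG : X0 → U0 → Xi → ProbabilityMeasure X → ProbabilityMeasure X)
    (hTG : ∀ (x0 : X0) (u0 : U0) (ξ : Xi) (μ : ProbabilityMeasure X),
      (TG x0 u0 ξ μ : Measure X) = (μ : Measure X).bind fun x =>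
        ((Γ ξ x : Measure U)).bind fun u => (p x u x0 u0 μ : Measure X))
    (γ : ℝ) (hγ0 : 0 < γ) (hγ1 : γ < 1) :
    ∀ ε > (0 : ℝ), ∃ N0 : ℕ, ∀ N ≥ N0, ∀ (θ : Θ) (x0 : X0) (μ : ProbabilityMeasure X)
      (u0 : U0) (ξ : Xi),
      |(∑' t : ℕ, γ ^ t * ∫ s, r s.1 s.2.1.1 (emp N s.2.2)
          ∂(pLawNFrom p p0 Γ pit θ N
            ((Measure.pi fun _ : Fin N => (μ : Measure X)).map
              fun x => (x0, (u0, ξ), x)) t))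
        - ∑' t : ℕ, γ ^ t * ∫ s, r s.1 s.2.1.1 s.2.2
          ∂(pLimLawFrom p0 pit TG θ (Measure.dirac (x0, (u0, ξ), μ)) t)| ≤ ε :=
  statement18_general Lp Lp0 Lr LPi LΓ Lpit p hp p0 hp0 r hr Γ hΓrule hΓ pit
    (fun θ => by simpa using hpit θ θ) TG hTG γ hγ0.le hγ1
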